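/- Let k ≥ 4 and let r be a positive integer with the Ramsey property for k: every simple graph on r vertices contains a clique of size k or an independent set of size k. Let G be a finite simple graph with m ≥ r edges, and let N be the number of subsets A ⊆ E(G) with |A| = k such that either the edges of A are pairwise vertex-disjoint or all edges of A share a common vertex. Then N · C(r, k) ≥ C(m, k). -/

import Mathlib

open SimpleGraph Finset

/-!
Colour each pair of edges of `G` by whether or not the two edges meet. The Ramsey property
then gives, in every `r`-set of edges, `k` edges that pairwise meet or are pairwise disjoint
(`exists_good_subset`). Pairwise disjoint edges form a matching, and since `k ≥ 4`, pairwise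
meeting edges form a star, as the only other intersecting family is a triangle
(`exists_common_vertex`).

Each of the `C(m, r)` sets of `r` edges thus contains one of the `N` good `k`-sets, and a given
`k`-set lies in at most `C(m - k, r - k)` sets of size `r`. Hence `C(m, r) ≤ N * C(m - k, r - k)`
(`choose_le_of_forall_exists_subset`), and the claim follows from the identity
`C(m, r) * C(r, k) = C(m, k) * C(m - k, r - k)`.
-/

/-- More than three pairwise meeting edges have a common vertex. If `s(v, a)` and `s(v, b)` are
two of them and some edge avoids `v`, that edge is `s(a, b)`, and every edge of the family is
one of the three sides of the triangle `v a b`. -/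
lemma exists_common_vertex {V : Type*} [DecidableEq V] (A : Finset (Sym2 V)) (hA : 3 < A.card)
    (h : ∀ e ∈ A, ∀ f ∈ A, e ≠ f → ∃ v, v ∈ e ∧ v ∈ f) : ∃ v, ∀ e ∈ A, v ∈ e := by
  obtain ⟨e, he, f, hf, hef⟩ := Finset.one_lt_card.1 (by omega : 1 < A.card)
  obtain ⟨v, hve, hvf⟩ := h e he f hf hef
  obtain ⟨a, rfl⟩ := Sym2.mem_iff_exists.1 hve
  obtain ⟨b, rfl⟩ := Sym2.mem_iff_exists.1 hvf
  have hab : a ≠ b := by rintro rfl; exact hef rfl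
  have avoid : ∀ g ∈ A, v ∉ g → g = s(a, b) := by
    intro g hg hvg
    have ha : a ∈ g := by
      obtain ⟨w, hw, hw'⟩ := h g hg _ he (by rintro rfl; exact hvg hve)
      rcases Sym2.mem_iff.1 hw' with rfl | rfl
      · exact absurd hw hvg
      · exact hw
    have hb : b ∈ g := by
      obtain ⟨w, hw, hw'⟩ := h g hg _ hf (by rintro rfl; exact hvg hvf)
      rcases Sym2.mem_iff.1 hw' with rfl | rfl
      · exact absurd hw hvg
      · exact hw
    exact (Sym2.mem_and_mem_iff hab).1 ⟨ha, hb⟩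
  refine ⟨v, ?_⟩
  by_contra! hcon
  obtain ⟨g, hg, hvg⟩ := hcon
  obtain rfl := avoid g hg hvg
  have hsub : A ⊆ {s(v, a), s(v, b), s(a, b)} := by
    intro x hx
    simp only [Finset.mem_insert, Finset.mem_singleton]
    by_cases hvx : v ∈ x
    · obtain ⟨w, hw, hw'⟩ := h x hx _ hg (by rintro rfl; exact hvg hvx)
      have hwv : v ≠ w := by rintro rfl; exact hvg hw'
      have hx' := (Sym2.mem_and_mem_iff hwv).1 ⟨hvx, hw⟩
      rcases Sym2.mem_iff.1 hw' with rfl | rfl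
      · exact Or.inl hx'
      · exact Or.inr (Or.inl hx')
    · exact Or.inr (Or.inr (avoid x hx hvx))
  have := (Finset.card_le_card hsub).trans Finset.card_le_three
  omega

/-- The Ramsey property, transported to the graph on a set `R` of `r` edges in which two edges
are adjacent when they share a vertex. -/
lemma exists_good_subset {V : Type*} [DecidableEq V] (k r : ℕ) (hk : 4 ≤ k)
    (hRamsey : ∀ G' : SimpleGraph (Fin r),
      (∃ s : Finset (Fin r), s.card = k ∧ G'.IsClique ↑s) ∨
      (∃ s : Finset (Fin r), s.card = k ∧
        (↑s : Set (Fin r)).Pairwise fun a b => ¬ G'.Adj a b))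
    (R : Finset (Sym2 V)) (hR : R.card = r) :
    ∃ A ⊆ R, A.card = k ∧
      (((↑A : Set (Sym2 V)).Pairwise fun e f => ∀ v : V, v ∈ e → v ∉ f) ∨
        ∃ v : V, ∀ e ∈ A, v ∈ e) := by
  let φ : Fin r ↪ Sym2 V :=
    (R.equivFinOfCardEq hR).symm.toEmbedding.trans (Function.Embedding.subtype _)
  have hφ : ∀ i, φ i ∈ R := fun i => ((R.equivFinOfCardEq hR).symm i).2
  have hsub : ∀ s : Finset (Fin r), s.map φ ⊆ R := by
    intro s x hx
    obtain ⟨i, -, rfl⟩ := Finset.mem_map.1 hx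
    exact hφ i
  let G' : SimpleGraph (Fin r) :=
    { Adj := fun i j => i ≠ j ∧ ∃ v, v ∈ φ i ∧ v ∈ φ j
      symm := ⟨fun i j ⟨hij, v, hi, hj⟩ => ⟨hij.symm, v, hj, hi⟩⟩
      loopless := ⟨fun i hi => hi.1 rfl⟩ }
  rcases hRamsey G' with ⟨s, hs, hcl⟩ | ⟨s, hs, hind⟩
  · refine ⟨s.map φ, hsub s, by rw [Finset.card_map, hs], Or.inr ?_⟩
    apply exists_common_vertex _ (by rw [Finset.card_map, hs]; omega)
    intro e he f hf hef
    obtain ⟨i, hi, rfl⟩ := Finset.mem_map.1 he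
    obtain ⟨j, hj, rfl⟩ := Finset.mem_map.1 hf
    exact (hcl hi hj (by rintro rfl; exact hef rfl)).2
  · refine ⟨s.map φ, hsub s, by rw [Finset.card_map, hs], Or.inl ?_⟩
    intro e he f hf hef v hv hv'
    obtain ⟨i, hi, rfl⟩ := Finset.mem_map.1 (Finset.mem_coe.1 he)
    obtain ⟨j, hj, rfl⟩ := Finset.mem_map.1 (Finset.mem_coe.1 hf)
    have hij : i ≠ j := by rintro rfl; exact hef rfl
    exact hind hi hj hij ⟨hij, v, hv, hv'⟩

/-- Double counting: every `r`-subset of `E` is the union of some `A ∈ 𝒜` and an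
`(r - k)`-subset of `E \ A`. -/
lemma choose_le_of_forall_exists_subset {α : Type*} [DecidableEq α] (E : Finset α) (k r : ℕ)
    (𝒜 : Finset (Finset α)) (h𝒜 : ∀ A ∈ 𝒜, A ⊆ E ∧ A.card = k)
    (h : ∀ R ⊆ E, R.card = r → ∃ A ∈ 𝒜, A ⊆ R) :
    E.card.choose r ≤ 𝒜.card * (E.card - k).choose (r - k) := by
  rw [← Finset.card_powersetCard]
  have hsub : E.powersetCard r ⊆
      𝒜.biUnion fun A => ((E \ A).powersetCard (r - k)).image (A ∪ ·) := by
    intro R hR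
    obtain ⟨hRE, hRr⟩ := Finset.mem_powersetCard.1 hR
    obtain ⟨A, hA, hAR⟩ := h R hRE hRr
    refine Finset.mem_biUnion.2 ⟨A, hA, Finset.mem_image.2 ⟨R \ A, ?_, ?_⟩⟩
    · rw [Finset.mem_powersetCard, Finset.card_sdiff_of_subset hAR, hRr, (h𝒜 A hA).2]
      exact ⟨Finset.sdiff_subset_sdiff hRE subset_rfl, rfl⟩
    · exact Finset.union_sdiff_of_subset hAR
  refine (Finset.card_le_card hsub).trans (Finset.card_biUnion_le_card_mul _ _ _ ?_)
  intro A hA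
  refine Finset.card_image_le.trans ?_
  rw [Finset.card_powersetCard, Finset.card_sdiff_of_subset (h𝒜 A hA).1, (h𝒜 A hA).2]

/-- Let `k ≥ 4`, let `r` have the diagonal Ramsey property for `k` (every simple graph
on `r` vertices contains a clique of size `k` or an independent set of size `k`), and
let `G` be a graph with `m ≥ r` edges.  If `N` is the number of `k`-edge subsets
`A ⊆ E(G)` whose edges are pairwise vertex-disjoint (a matching `M_k`) or all share a
common vertex (a star `K_{1,k}`), then `N · C(r,k) ≥ C(m,k)`. -/
theorem statement19 {V : Type*} [Fintype V] [DecidableEq V]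
    (G : SimpleGraph V) [DecidableRel G.Adj] (k r : ℕ) (hk : 4 ≤ k) (hr : 0 < r)
    (hRamsey : ∀ G' : SimpleGraph (Fin r),
      (∃ s : Finset (Fin r), s.card = k ∧ G'.IsClique ↑s) ∨
      (∃ s : Finset (Fin r), s.card = k ∧
        (↑s : Set (Fin r)).Pairwise fun a b => ¬ G'.Adj a b))
    (hG : r ≤ G.edgeFinset.card) :
    Nat.choose G.edgeFinset.card k ≤
      Nat.card {A : Finset (Sym2 V) // A ⊆ G.edgeFinset ∧ A.card = k ∧
          (((↑A : Set (Sym2 V)).Pairwise fun e f => ∀ v : V, v ∈ e → v ∉ f) ∨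
            ∃ v : V, ∀ e ∈ A, v ∈ e)} * Nat.choose r k := by
  classical
  have hkr : k ≤ r := by
    rcases hRamsey ⊥ with ⟨s, hs, -⟩ | ⟨s, hs, -⟩ <;>
      simpa [hs] using s.card_le_univ
  set E := G.edgeFinset with hE
  let P : Finset (Sym2 V) → Prop := fun A => A ⊆ E ∧ A.card = k ∧
    (((↑A : Set (Sym2 V)).Pairwise fun e f => ∀ v : V, v ∈ e → v ∉ f) ∨
      ∃ v : V, ∀ e ∈ A, v ∈ e)
  change E.card.choose k ≤ Nat.card {A // P A} * r.choose k
  have hN : Nat.card {A // P A} = (Finset.univ.filter P).card := by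
    rw [Nat.card_eq_fintype_card, Fintype.card_subtype]
  rw [hN]
  have hcount : E.card.choose r ≤ (Finset.univ.filter P).card * (E.card - k).choose (r - k) := by
    apply choose_le_of_forall_exists_subset
    · intro A hA
      have hPA : P A := (Finset.mem_filter.1 hA).2
      exact ⟨hPA.1, hPA.2.1⟩
    · intro R hRE hRr
      obtain ⟨A, hAR, hAk, hA⟩ := exists_good_subset k r hk hRamsey R hRr
      exact ⟨A, Finset.mem_filter.2 ⟨Finset.mem_univ _, hAR.trans hRE, hAk, hA⟩, hAR⟩
  have hpos : 0 < (E.card - k).choose (r - k) := Nat.choose_pos (by omega)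
  refine Nat.le_of_mul_le_mul_right ?_ hpos
  rw [← Nat.choose_mul hkr]
  calc E.card.choose r * r.choose k
      ≤ ((Finset.univ.filter P).card * (E.card - k).choose (r - k)) * r.choose k :=
        Nat.mul_le_mul_right _ hcount
    _ = _ := by ring
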